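/- arXiv:2305.13074 — 5 statements merged into one kernel-verified Lean document; each statement's English description precedes it below -/
import Mathlib

section
/- Let B be a Boolean ring and let spec(B) denote the set of ring homomorphisms B → F₂, topologized as a subspace of the product space F₂^B where F₂ carries the discrete topology (this makes spec(B) a profinite space). Then the evaluation map B → C(spec(B), F₂), sending b to the continuous function f ↦ f(b), is a ring isomorphism onto the ring of continuous F₂-valued functions on spec(B). -/
/-- The field `F₂` with the discrete topology. -/
instance : TopologicalSpace (ZMod 2) := ⊥

instance : DiscreteTopology (ZMod 2) := ⟨rfl⟩

/-- For a Boolean ring `B`, `spec B = Hom(B, F₂)` carries the subspace topology from the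
product space `F₂ ^ B` (making it a profinite space). -/
instance specTopologicalSpace (B : Type*) [BooleanRing B] :
    TopologicalSpace (B →+* ZMod 2) :=
  TopologicalSpace.induced (fun f => (f : B → ZMod 2)) Pi.topologicalSpace

/-- Every prime ideal of a Boolean ring is the kernel of a homomorphism to `F₂`. -/
theorem exists_ringHom_zmod_two_of_isPrime {B : Type*} [BooleanRing B] (P : Ideal B)
    [hP : P.IsPrime] : ∃ f : B →+* ZMod 2, ∀ x, f x = 0 ↔ x ∈ P := by
  classical
  refine ⟨{ toFun := fun x => if x ∈ P then 0 else 1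
            map_zero' := by simp
            map_one' := if_neg ((Ideal.ne_top_iff_one P).1 hP.ne_top)
            map_mul' := fun x y => by
              by_cases hx : x ∈ P <;> by_cases hy : y ∈ P <;>
                simp [hP.mul_mem_iff_mem_or_mem, hx, hy]
            map_add' := fun x y => ?_ }, fun x => by simp⟩
  by_cases hx : x ∈ P
  · simp [P.add_mem_iff_right hx, hx]
  by_cases hy : y ∈ P
  · simp [P.add_mem_iff_left hy, hy]
  have hxy : x + y ∈ P := by
    have h : x * y * (x + y) = 0 := by
      calc x * y * (x + y) = (x * x) * y + x * (y * y) := by ring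
        _ = 0 := by rw [BooleanRing.mul_self, BooleanRing.mul_self, BooleanRing.add_self]
    have h' : x * y * (x + y) ∈ P := h ▸ P.zero_mem
    exact (hP.mem_or_mem h').resolve_left fun h₂ => (hP.mem_or_mem h₂).elim hx hy
  simp only [hxy, hx, hy, if_true, if_false]
  decide

/-- A proper ideal of a Boolean ring is annihilated by some homomorphism to `F₂`. -/
theorem exists_ringHom_zmod_two_vanishing {B : Type*} [BooleanRing B] {I : Ideal B}
    (hI : I ≠ ⊤) : ∃ f : B →+* ZMod 2, ∀ x ∈ I, f x = 0 := by
  obtain ⟨M, hM, hIM⟩ := I.exists_le_maximal hI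
  have := hM.isPrime
  obtain ⟨f, hf⟩ := exists_ringHom_zmod_two_of_isPrime M
  exact ⟨f, fun x hx => (hf x).2 (hIM hx)⟩

/-- Homomorphisms to `F₂` separate the points of a Boolean ring from zero. -/
theorem eq_zero_of_forall_ringHom_zmod_two {B : Type*} [BooleanRing B] {b : B}
    (h : ∀ f : B →+* ZMod 2, f b = 0) : b = 0 := by
  by_contra hb
  have hI : Ideal.span {1 + b} ≠ ⊤ := by
    rw [Ne, Ideal.span_singleton_eq_top]
    intro hu
    refine hb (hu.mul_left_eq_zero.1 ?_)
    rw [mul_add, mul_one, BooleanRing.mul_self, BooleanRing.add_self]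
  obtain ⟨f, hf⟩ := exists_ringHom_zmod_two_vanishing hI
  simpa [h f] using hf _ (Ideal.mem_span_singleton_self _)

theorem continuous_ringHom_eval {B : Type*} [BooleanRing B] (b : B) :
    Continuous fun f : B →+* ZMod 2 => f b :=
  (continuous_apply b).comp continuous_induced_dom

/-- A continuous function on `spec B` is constant on a basic clopen neighbourhood
`{f | f b = 1}` of each point. -/
theorem exists_basic_nhd_constant {B : Type*} [BooleanRing B]
    (g : C(B →+* ZMod 2, ZMod 2)) (f₀ : B →+* ZMod 2) :
    ∃ b : B, f₀ b = 1 ∧ ∀ f : B →+* ZMod 2, f b ≠ 0 → g f = g f₀ := by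
  classical
  have hopen : IsOpen (g ⁻¹' {g f₀}) := (isOpen_discrete _).preimage g.continuous
  obtain ⟨U, hU, hUg⟩ := isOpen_induced_iff.1 hopen
  have hf₀ : (f₀ : B → ZMod 2) ∈ U := by
    change f₀ ∈ (fun f : B →+* ZMod 2 => (f : B → ZMod 2)) ⁻¹' U
    rw [hUg]
    rfl
  obtain ⟨F, u, hu, hFU⟩ := isOpen_pi_iff.1 hU _ hf₀
  have key : ∀ a c : ZMod 2, 1 + a + c ≠ 0 → a = c := by decide
  have hcast : ∀ (f : B →+* ZMod 2) (a : ZMod 2), f (a.val : B) = a := fun f a => by simp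
  refine ⟨∏ x ∈ F, (1 + x + ((f₀ x).val : B)), ?_, fun f hf => ?_⟩
  · rw [map_prod]
    refine Finset.prod_eq_one fun x _ => ?_
    rw [map_add, map_add, map_one, hcast, add_assoc, CharTwo.add_self_eq_zero, add_zero]
  · rw [map_prod, Finset.prod_ne_zero_iff] at hf
    have hfU : f ∈ (fun f : B →+* ZMod 2 => (f : B → ZMod 2)) ⁻¹' U := by
      refine hFU fun x hx => ?_
      have hfx := hf x hx
      rw [map_add, map_add, map_one, hcast] at hfx
      simpa only [key _ _ hfx] using (hu x hx).2
    rw [hUg] at hfU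
    exact hfU

/-- Every continuous `F₂`-valued function on `spec B` is evaluation at an element of `B`. -/
theorem exists_forall_ringHom_eval_eq {B : Type*} [BooleanRing B]
    (g : C(B →+* ZMod 2, ZMod 2)) : ∃ b : B, ∀ f : B →+* ZMod 2, f b = g f := by
  let I : Ideal B :=
    { carrier := {b | ∃ c : B, ∀ f : B →+* ZMod 2, f c = f b * g f}
      zero_mem' := ⟨0, fun f => by simp⟩
      add_mem' := by
        rintro a b ⟨c, hc⟩ ⟨d, hd⟩
        exact ⟨c + d, fun f => by rw [map_add, map_add, hc, hd, add_mul]⟩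
      smul_mem' := by
        rintro a b ⟨c, hc⟩
        exact ⟨a * c, fun f => by rw [smul_eq_mul, map_mul, map_mul, hc, mul_assoc]⟩ }
  have hI : I = ⊤ := by
    by_contra hI
    obtain ⟨f₀, hf₀⟩ := exists_ringHom_zmod_two_vanishing hI
    obtain ⟨b, hb, hconst⟩ := exists_basic_nhd_constant g f₀
    have hbI : b ∈ I := by
      refine ⟨b * ((g f₀).val : B), fun f => ?_⟩
      by_cases hfb : f b = 0
      · rw [map_mul, hfb, zero_mul, zero_mul]
      · rw [map_mul, hconst f hfb]
        simp
    exact one_ne_zero (hb.symm.trans (hf₀ b hbI))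
  obtain ⟨c, hc⟩ : (1 : B) ∈ I := hI ▸ Submodule.mem_top
  exact ⟨c, fun f => by rw [hc, map_one, one_mul]⟩

/-- Stone duality, one half: for a Boolean ring `B`, the evaluation map
`B → C(spec B, F₂)`, `b ↦ (f ↦ f b)`, is a ring isomorphism onto the ring of continuous
`F₂`-valued functions on `spec B`. -/
theorem boolean_ring_eval_ringEquiv (B : Type*) [BooleanRing B] :
    ∃ e : B ≃+* C(B →+* ZMod 2, ZMod 2), ∀ (b : B) (f : B →+* ZMod 2), e b f = f b := by
  let φ : B →+* C(B →+* ZMod 2, ZMod 2) :=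
    { toFun := fun b => ⟨fun f => f b, continuous_ringHom_eval b⟩
      map_zero' := by ext f; exact map_zero f
      map_one' := by ext f; exact map_one f
      map_add' := fun a b => by ext f; exact map_add f a b
      map_mul' := fun a b => by ext f; exact map_mul f a b }
  have hinj : Function.Injective φ := (injective_iff_map_eq_zero φ).2 fun b hb =>
    eq_zero_of_forall_ringHom_zmod_two fun f => DFunLike.congr_fun hb f
  have hsurj : Function.Surjective φ := fun g =>
    (exists_forall_ringHom_eval_eq g).imp fun _ hb => ContinuousMap.ext hb
  exact ⟨RingEquiv.ofBijective φ ⟨hinj, hsurj⟩, fun _ _ => rfl⟩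
end

section
/- Let S be a profinite space (compact, Hausdorff, totally disconnected topological space) and let C(S, F₂) be the ring of continuous functions from S to the discrete field F₂. Then the evaluation map from S to the set of ring homomorphisms C(S, F₂) → F₂, sending s ∈ S to the homomorphism f ↦ f(s), is a bijection. -/
/-- Evaluation at a point `s : S`, as a ring homomorphism from the ring `C(S, F₂)` of
continuous `F₂`-valued functions, sending `f` to `f s`. -/
def evalAtRingHom (S : Type*) [TopologicalSpace S] (s : S) :
    C(S, ZMod 2) →+* ZMod 2 :=
  (Pi.evalRingHom (fun _ : S => ZMod 2) s).comp (ContinuousMap.coeFnRingHom)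

theorem evalAtRingHom_apply {S : Type*} [TopologicalSpace S] (s : S) (f : C(S, ZMod 2)) :
    evalAtRingHom S s f = f s :=
  rfl

/-- Continuous `F₂`-valued functions separate the points of a totally separated space. -/
theorem evalAtRingHom_injective (S : Type*) [TopologicalSpace S] [TotallySeparatedSpace S] :
    Function.Injective (evalAtRingHom S) := by
  intro s t hst
  by_contra hne
  obtain ⟨U, hU, hs, ht⟩ := exists_isClopen_of_totally_separated hne
  let f : C(S, ZMod 2) := ⟨U.indicator 1, continuous_one.indicator (by simp [hU.frontier_eq])⟩
  have hf : f s = f t := DFunLike.congr_fun hst f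
  have hs' : f s = 1 := Set.indicator_of_mem hs 1
  have ht' : f t = 0 := Set.indicator_of_notMem ht 1
  exact one_ne_zero (hs'.symm.trans (hf.trans ht'))

/-- On a compact space, the functions in the kernel of a ring homomorphism `C(S, F₂) → F₂`
have a common zero. -/
theorem exists_forall_eq_zero_of_map_eq_zero {S : Type*} [TopologicalSpace S] [CompactSpace S]
    (φ : C(S, ZMod 2) →+* ZMod 2) : ∃ s : S, ∀ f : C(S, ZMod 2), φ f = 0 → f s = 0 := by
  by_contra! h
  obtain ⟨I, hI⟩ := isCompact_univ.elim_finite_subfamily_closed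
    (fun f : {f : C(S, ZMod 2) // φ f = 0} => {s : S | f.1 s = 0})
    (fun f => isClosed_eq f.1.continuous continuous_const)
    (by
      refine Set.eq_empty_of_forall_notMem fun s hs => ?_
      obtain ⟨f, hf, hfs⟩ := h s
      exact hfs (Set.mem_iInter.1 hs.2 ⟨f, hf⟩))
  have hprod : ∏ f ∈ I, (1 - f.1) = 0 := by
    ext1 s
    have hs : s ∉ ⋂ f ∈ I, {s : S | f.1 s = 0} := fun hs =>
      Set.notMem_empty s (hI ▸ ⟨Set.mem_univ s, hs⟩)
    simp only [Set.mem_iInter, Set.mem_ofPred_eq, not_forall] at hs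
    obtain ⟨f, hf, hfs⟩ := hs
    rw [ContinuousMap.prod_apply]
    refine Finset.prod_eq_zero hf ?_
    rw [ContinuousMap.sub_apply, Fin.eq_one_of_ne_zero (f.1 s) hfs]
    exact sub_self 1
  have hmap := congrArg φ hprod
  rw [map_prod, map_zero, Finset.prod_eq_one fun f _ => by rw [map_sub, map_one, f.2, sub_zero]]
    at hmap
  exact one_ne_zero hmap

/-- On a compact space, every ring homomorphism `C(S, F₂) → F₂` is evaluation at a point. -/
theorem evalAtRingHom_surjective (S : Type*) [TopologicalSpace S] [CompactSpace S] :
    Function.Surjective (evalAtRingHom S) := by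
  intro φ
  obtain ⟨s, hs⟩ := exists_forall_eq_zero_of_map_eq_zero φ
  refine ⟨s, RingHom.ext fun f => ?_⟩
  rw [evalAtRingHom_apply]
  by_cases hf : φ f = 0
  · rw [hf, hs f hf]
  · have hf1 : φ f = 1 := Fin.eq_one_of_ne_zero _ hf
    have hfs := hs (f - 1) (by rw [map_sub, map_one, hf1, sub_self])
    rw [hf1]
    exact sub_eq_zero.1 hfs

/-- Stone duality, the other half: for a profinite space `S` (compact, Hausdorff, totally
disconnected), the evaluation map `S → Hom(C(S, F₂), F₂)`, `s ↦ (f ↦ f s)`, is a bijection. -/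
theorem profinite_eval_bijective (S : Type*) [TopologicalSpace S] [CompactSpace S]
    [T2Space S] [TotallyDisconnectedSpace S] :
    Function.Bijective (fun s : S => evalAtRingHom S s) := by
  exact ⟨evalAtRingHom_injective S, evalAtRingHom_surjective S⟩
end

section
/- Let B be a finite Boolean ring and M a module over B. For each ring homomorphism f : B → F₂, let F₂(f) denote F₂ equipped with the B-module structure obtained by restriction of scalars along f. Then the canonical additive map M → ∏_{f} F₂(f) ⊗_B M, sending m to the family (1 ⊗ m)_f indexed by the ring homomorphisms f : B → F₂, is bijective. -/
open TensorProduct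

/-- `F₂(f)`: the field `F₂` viewed as a module over the Boolean ring `B` by restriction of
scalars along the ring homomorphism `f : B → F₂`. -/
def F2of (B : Type*) [BooleanRing B] (_f : B →+* ZMod 2) : Type := ZMod 2

instance (B : Type*) [BooleanRing B] (f : B →+* ZMod 2) : AddCommGroup (F2of B f) :=
  inferInstanceAs (AddCommGroup (ZMod 2))

instance (B : Type*) [BooleanRing B] (f : B →+* ZMod 2) : One (F2of B f) :=
  inferInstanceAs (One (ZMod 2))

instance (B : Type*) [BooleanRing B] (f : B →+* ZMod 2) : Module B (F2of B f) :=
  Module.compHom (ZMod 2) f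

namespace BooleanRing

variable {B : Type*} [BooleanRing B]

theorem one_add_mem_of_notMem {I : Ideal B} [I.IsPrime] {a : B} (ha : a ∉ I) : 1 + a ∈ I := by
  have h : a * (1 + a) ∈ I := by
    rw [mul_one_add, BooleanRing.mul_self, BooleanRing.add_self]
    exact I.zero_mem
  exact (Ideal.IsPrime.mem_or_mem ‹_› h).resolve_left ha

theorem add_mem_of_notMem {I : Ideal B} [I.IsPrime] {a b : B} (ha : a ∉ I) (hb : b ∉ I) :
    a + b ∈ I := by
  have h := I.add_mem (one_add_mem_of_notMem ha) (one_add_mem_of_notMem hb)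
  rwa [add_add_add_comm, BooleanRing.add_self, zero_add] at h

open Classical in
/-- The character of a Boolean ring with kernel a given prime ideal. -/
noncomputable def characterOfPrime (I : Ideal B) [hI : I.IsPrime] : B →+* ZMod 2 where
  toFun b := if b ∈ I then 0 else 1
  map_one' := if_neg (I.ne_top_iff_one.mp hI.ne_top)
  map_zero' := if_pos I.zero_mem
  map_mul' a b := by
    by_cases ha : a ∈ I <;> by_cases hb : b ∈ I <;> simp [hI.mul_mem_iff_mem_or_mem, ha, hb]
  map_add' a b := by
    by_cases ha : a ∈ I <;> by_cases hb : b ∈ I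
    · simp [ha, hb, I.add_mem ha hb]
    · simp [ha, hb, I.add_mem_iff_right ha]
    · simp [ha, hb, I.add_mem_iff_left hb]
    · simp only [ha, hb, add_mem_of_notMem ha hb, if_true, if_false]
      rfl

theorem eq_zero_of_forall_character {b : B} (h : ∀ f : B →+* ZMod 2, f b = 0) : b = 0 := by
  by_contra hb
  have hu : ¬ IsUnit (1 + b) := fun hu => hb <| hu.mul_left_cancel <| by
    rw [one_add_mul, BooleanRing.mul_self, BooleanRing.add_self, mul_zero]
  obtain ⟨I, hI, hmem⟩ := exists_max_ideal_of_mem_nonunits hu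
  have := hI.isPrime
  have hbI : b ∉ I := fun hbI =>
    I.ne_top_iff_one.mp hI.ne_top ((I.add_mem_iff_left hbI).mp hmem)
  have hf := h (characterOfPrime I)
  simp [characterOfPrime, hbI] at hf

theorem eq_of_forall_character {a b : B} (h : ∀ f : B →+* ZMod 2, f a = f b) : a = b :=
  sub_eq_zero.mp <| eq_zero_of_forall_character fun f => by rw [map_sub, h f, sub_self]

variable [Finite B]

open Classical in
theorem exists_characteristic_idempotent (f : B →+* ZMod 2) :
    ∃ e : B, ∀ g : B →+* ZMod 2, g e = if g = f then 1 else 0 := by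
  have := Fintype.ofFinite B
  refine ⟨∏ b : B, if f b = 0 then 1 + b else b, fun g => ?_⟩
  rw [map_prod]
  split_ifs with hg
  · subst hg
    refine Finset.prod_eq_one fun b _ => ?_
    split_ifs with hb
    · simp [hb]
    · exact Fin.eq_one_of_ne_zero _ hb
  · obtain ⟨b, hb⟩ := DFunLike.ne_iff.mp hg
    refine Finset.prod_eq_zero (Finset.mem_univ b) ?_
    split_ifs with hfb
    · rw [hfb] at hb
      rw [map_add, map_one, Fin.eq_one_of_ne_zero _ hb]
      rfl
    · by_contra hgb
      exact hb ((Fin.eq_one_of_ne_zero _ hgb).trans (Fin.eq_one_of_ne_zero _ hfb).symm)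

/-- The idempotent of a finite Boolean ring at which `f` is the only nonvanishing character. -/
noncomputable def idempotentOf (f : B →+* ZMod 2) : B :=
  (exists_characteristic_idempotent f).choose

open Classical in
theorem character_idempotentOf (f g : B →+* ZMod 2) :
    g (idempotentOf f) = if g = f then 1 else 0 :=
  (exists_characteristic_idempotent f).choose_spec g

theorem sum_idempotentOf [Fintype (B →+* ZMod 2)] :
    ∑ f : B →+* ZMod 2, idempotentOf f = 1 := by
  classical
  exact eq_of_forall_character fun g => by simp [character_idempotentOf]

theorem mul_idempotentOf (f : B →+* ZMod 2) (b : B) :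
    b * idempotentOf f = if f b = 0 then 0 else idempotentOf f := by
  refine eq_of_forall_character fun g => ?_
  by_cases hg : g = f
  · subst hg
    by_cases hb : g b = 0
    · simp [hb]
    · rw [if_neg hb, map_mul, Fin.eq_one_of_ne_zero _ hb]
      exact one_mul _
  · split_ifs <;> simp [character_idempotentOf, hg]

end BooleanRing

namespace F2of

open BooleanRing

variable {B : Type*} [BooleanRing B] {f : B →+* ZMod 2}

theorem smul_one_eq (b : B) : b • (1 : F2of B f) = f b :=
  mul_one (f b)

theorem eq_zero_or_eq_one (c : F2of B f) : c = 0 ∨ c = 1 :=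
  or_iff_not_imp_left.mpr (Fin.eq_one_of_ne_zero (c : ZMod 2))

theorem exists_smul_one_eq (c : F2of B f) : ∃ b : B, b • (1 : F2of B f) = c := by
  obtain rfl | rfl := eq_zero_or_eq_one c
  · exact ⟨0, zero_smul _ _⟩
  · exact ⟨1, one_smul _ _⟩

variable {M : Type*} [AddCommGroup M] [Module B M]

theorem exists_one_tmul_eq (t : F2of B f ⊗[B] M) : ∃ m : M, (1 : F2of B f) ⊗ₜ[B] m = t := by
  induction t with
  | zero => exact ⟨0, TensorProduct.tmul_zero _ _⟩
  | tmul c m =>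
    obtain ⟨b, rfl⟩ := exists_smul_one_eq c
    exact ⟨b • m, (TensorProduct.smul_tmul _ _ _).symm⟩
  | add s t hs ht =>
    obtain ⟨m, rfl⟩ := hs
    obtain ⟨n, rfl⟩ := ht
    exact ⟨m + n, TensorProduct.tmul_add _ _ _⟩

variable [Finite B]

open Classical in
/-- The `B`-linear embedding of `F₂(f)` in `B` sending `1` to the idempotent of `f`. -/
noncomputable def toRing (f : B →+* ZMod 2) : F2of B f →ₗ[B] B where
  toFun c := if c = 0 then 0 else idempotentOf f
  map_add' c d := by
    have h : (1 : F2of B f) ≠ 0 := one_ne_zero (α := ZMod 2)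
    have h' : (1 : F2of B f) + 1 = 0 := CharTwo.add_self_eq_zero (R := ZMod 2) 1
    obtain rfl | rfl := eq_zero_or_eq_one c <;> obtain rfl | rfl := eq_zero_or_eq_one d <;>
      simp [h, h', BooleanRing.add_self]
  map_smul' b c := by
    obtain rfl | rfl := eq_zero_or_eq_one c
    · simp
    · have h : (1 : F2of B f) ≠ 0 := one_ne_zero (α := ZMod 2)
      rw [RingHom.id_apply, if_neg h, smul_eq_mul, mul_idempotentOf, smul_one_eq]
      exact if_congr Iff.rfl rfl rfl

theorem toRing_one : toRing f 1 = idempotentOf f :=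
  if_neg (one_ne_zero (α := ZMod 2))

theorem idempotentOf_smul_eq {m n : M}
    (h : (1 : F2of B f) ⊗ₜ[B] m = (1 : F2of B f) ⊗ₜ[B] n) :
    idempotentOf f • m = idempotentOf f • n := by
  simpa [toRing_one] using
    congrArg (TensorProduct.lift (LinearMap.lsmul B M ∘ₗ toRing f)) h

open Classical in
theorem one_tmul_idempotentOf_smul (g : B →+* ZMod 2) (m : M) :
    (1 : F2of B f) ⊗ₜ[B] (idempotentOf g • m) = if f = g then (1 : F2of B f) ⊗ₜ[B] m else 0 := by
  rw [← TensorProduct.smul_tmul, smul_one_eq, character_idempotentOf]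
  split_ifs
  · rfl
  · exact TensorProduct.zero_tmul _ _

end F2of

/-- For a finite Boolean ring `B` and a `B`-module `M`, the canonical map
`M → ∏_{f : B →+* F₂} F₂(f) ⊗[B] M`, `m ↦ (1 ⊗ m)_f`, is bijective. -/
theorem finite_boolean_ring_module_decomposition (B : Type*) [BooleanRing B] [Finite B]
    (M : Type*) [AddCommGroup M] [Module B M] :
    Function.Bijective
      (fun m : M => fun f : B →+* ZMod 2 => ((1 : F2of B f) ⊗ₜ[B] m :
        TensorProduct B (F2of B f) M)) := by
  classical
  have : Finite (B →+* ZMod 2) := DFunLike.finite _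
  have := Fintype.ofFinite (B →+* ZMod 2)
  refine ⟨fun m n h => ?_, fun t => ?_⟩
  · rw [← one_smul B m, ← one_smul B n, ← BooleanRing.sum_idempotentOf, Finset.sum_smul,
      Finset.sum_smul]
    exact Finset.sum_congr rfl fun f _ => F2of.idempotentOf_smul_eq (congrFun h f)
  · choose m hm using fun f => F2of.exists_one_tmul_eq (t f)
    refine ⟨∑ g, BooleanRing.idempotentOf g • m g, funext fun f => ?_⟩
    simp only [TensorProduct.tmul_sum, F2of.one_tmul_idempotentOf_smul]
    rw [Finset.sum_ite_eq Finset.univ f, if_pos (Finset.mem_univ f), hm]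
end

section
/- Let F₂[u,v] be the polynomial ring over F₂ in two variables u, v, and let σ be the F₂-algebra automorphism of F₂[u,v] determined by σ(u) = u + v and σ(v) = v. Then the fixed subalgebra {p ∈ F₂[u,v] : σ(p) = p} is equal to the F₂-subalgebra of F₂[u,v] generated by v and u² + uv. -/
open MvPolynomial

/-- `F₂[u,v]` is spanned by `1` and `u` over the subalgebra generated by `v` and `u² + uv`. -/
theorem exists_mem_adjoin_eq_add_mul_X (p : MvPolynomial (Fin 2) (ZMod 2)) :
    ∃ a ∈ Algebra.adjoin (ZMod 2)
        {(X 1 : MvPolynomial (Fin 2) (ZMod 2)), X 0 ^ 2 + X 0 * X 1},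
      ∃ b ∈ Algebra.adjoin (ZMod 2)
        {(X 1 : MvPolynomial (Fin 2) (ZMod 2)), X 0 ^ 2 + X 0 * X 1},
      p = a + b * X 0 := by
  set A := Algebra.adjoin (ZMod 2)
    {(X 1 : MvPolynomial (Fin 2) (ZMod 2)), X 0 ^ 2 + X 0 * X 1}
  have hv : (X 1 : MvPolynomial (Fin 2) (ZMod 2)) ∈ A := Algebra.subset_adjoin (by simp)
  have hw : (X 0 ^ 2 + X 0 * X 1 : MvPolynomial (Fin 2) (ZMod 2)) ∈ A :=
    Algebra.subset_adjoin (by simp)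
  induction p using MvPolynomial.induction_on with
  | C r => exact ⟨C r, A.algebraMap_mem r, 0, A.zero_mem, by simp⟩
  | add p q hp hq =>
    obtain ⟨a, ha, b, hb, rfl⟩ := hp
    obtain ⟨c, hc, d, hd, rfl⟩ := hq
    exact ⟨a + c, A.add_mem ha hc, b + d, A.add_mem hb hd, by ring⟩
  | mul_X p i hp =>
    obtain ⟨a, ha, b, hb, rfl⟩ := hp
    fin_cases i
    · refine ⟨b * (X 0 ^ 2 + X 0 * X 1), A.mul_mem hb hw, a - b * X 1,
        A.sub_mem ha (A.mul_mem hb hv), ?_⟩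
      simp only [Fin.zero_eta]
      ring
    · refine ⟨a * X 1, A.mul_mem ha hv, b * X 1, A.mul_mem hb hv, ?_⟩
      simp only [Fin.mk_one]
      ring

/-- The subalgebra generated by `v` and `u² + uv` is fixed by `u ↦ u + v`, `v ↦ v`. -/
theorem aeval_eq_self_of_mem_adjoin {p : MvPolynomial (Fin 2) (ZMod 2)}
    (hp : p ∈ Algebra.adjoin (ZMod 2)
      {(X 1 : MvPolynomial (Fin 2) (ZMod 2)), X 0 ^ 2 + X 0 * X 1}) :
    aeval ![(X 0 + X 1 : MvPolynomial (Fin 2) (ZMod 2)), X 1] p = p := by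
  suffices h : Algebra.adjoin (ZMod 2)
      {(X 1 : MvPolynomial (Fin 2) (ZMod 2)), X 0 ^ 2 + X 0 * X 1} ≤
      AlgHom.equalizer (aeval ![(X 0 + X 1 : MvPolynomial (Fin 2) (ZMod 2)), X 1])
        (AlgHom.id (ZMod 2) _) from h hp
  rw [Algebra.adjoin_le_iff]
  rintro q (rfl | rfl)
  · simp
  · have h2 : (2 : MvPolynomial (Fin 2) (ZMod 2)) = 0 := CharTwo.two_eq_zero
    simp only [SetLike.mem_coe, AlgHom.mem_equalizer, map_add, map_pow, map_mul, aeval_X,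
      AlgHom.id_apply, Matrix.cons_val_zero, Matrix.cons_val_one]
    linear_combination (X 0 * X 1 + X 1 ^ 2) * h2

/-- In `F₂[u,v]` (with `u = X 0`, `v = X 1`), let `σ` be the algebra endomorphism with
`σ(u) = u + v`, `σ(v) = v` (an automorphism of order 2).  Its fixed subalgebra is the
`F₂`-subalgebra generated by `v` and `u² + uv`. -/
theorem fixed_subalgebra_eq_adjoin :
    {p : MvPolynomial (Fin 2) (ZMod 2) |
        aeval ![(X 0 + X 1 : MvPolynomial (Fin 2) (ZMod 2)), X 1] p = p} =
      (Algebra.adjoin (ZMod 2)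
        {(X 1 : MvPolynomial (Fin 2) (ZMod 2)), X 0 ^ 2 + X 0 * X 1} :
          Subalgebra (ZMod 2) (MvPolynomial (Fin 2) (ZMod 2))) := by
  ext p
  refine ⟨fun hp => ?_, aeval_eq_self_of_mem_adjoin⟩
  obtain ⟨a, ha, b, hb, rfl⟩ := exists_mem_adjoin_eq_add_mul_X p
  have hbv : b * X 1 = 0 := by
    simp only [Set.mem_ofPred_eq, map_add, map_mul, aeval_X, Matrix.cons_val_zero,
      aeval_eq_self_of_mem_adjoin ha, aeval_eq_self_of_mem_adjoin hb] at hp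
    linear_combination hp
  obtain rfl : b = 0 := (mul_eq_zero.mp hbv).resolve_right (X_ne_zero 1)
  simpa using ha
end

section
/- Let F₂[u,v] be the polynomial ring over F₂ in two variables u, v, let F₂[t] be the polynomial ring in one variable t, and let Δ : F₂[u,v] → F₂[u,v] ⊗ F₂[t] (tensor product over F₂) be the F₂-algebra homomorphism determined by Δ(u) = u⊗1 + 1⊗t and Δ(v) = v⊗1. Then Δ(u² + uv) = (u² + uv)⊗1 + v⊗t + 1⊗t², and consequently Δ maps the F₂-subalgebra A of F₂[u,v] generated by v and u² + uv into the image of the canonical map A ⊗ F₂[t] → F₂[u,v] ⊗ F₂[t]. -/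
open MvPolynomial TensorProduct

/-- The coaction `Δ : F₂[u,v] → F₂[u,v] ⊗ F₂[t]` with `Δ(u) = u⊗1 + 1⊗t`, `Δ(v) = v⊗1`
(here `u = X 0`, `v = X 1`). -/
noncomputable def coactionDelta :
    MvPolynomial (Fin 2) (ZMod 2) →ₐ[ZMod 2]
      (MvPolynomial (Fin 2) (ZMod 2) ⊗[ZMod 2] Polynomial (ZMod 2)) :=
  aeval ![(X 0 : MvPolynomial (Fin 2) (ZMod 2)) ⊗ₜ[ZMod 2] (1 : Polynomial (ZMod 2)) +
      (1 : MvPolynomial (Fin 2) (ZMod 2)) ⊗ₜ[ZMod 2] Polynomial.X,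
    (X 1 : MvPolynomial (Fin 2) (ZMod 2)) ⊗ₜ[ZMod 2] (1 : Polynomial (ZMod 2))]

/-- `Δ(u² + uv) = (u² + uv)⊗1 + v⊗t + 1⊗t²`, and consequently `Δ` maps the subalgebra
`A = F₂[v, u² + uv]` into the image of the canonical map `A ⊗ F₂[t] → F₂[u,v] ⊗ F₂[t]`. -/
theorem coactionDelta_maps_invariants :
    coactionDelta ((X 0 : MvPolynomial (Fin 2) (ZMod 2)) ^ 2 + X 0 * X 1) =
        ((X 0 : MvPolynomial (Fin 2) (ZMod 2)) ^ 2 + X 0 * X 1) ⊗ₜ[ZMod 2]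
            (1 : Polynomial (ZMod 2)) +
          (X 1 : MvPolynomial (Fin 2) (ZMod 2)) ⊗ₜ[ZMod 2] Polynomial.X +
          (1 : MvPolynomial (Fin 2) (ZMod 2)) ⊗ₜ[ZMod 2] Polynomial.X ^ 2 ∧
      ∀ p ∈ Algebra.adjoin (ZMod 2)
          {(X 1 : MvPolynomial (Fin 2) (ZMod 2)), X 0 ^ 2 + X 0 * X 1},
        coactionDelta p ∈ Set.range
          (Algebra.TensorProduct.map
            (Algebra.adjoin (ZMod 2)
              {(X 1 : MvPolynomial (Fin 2) (ZMod 2)), X 0 ^ 2 + X 0 * X 1}).val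
            (AlgHom.id (ZMod 2) (Polynomial (ZMod 2)))) := by
  have hv : coactionDelta (X 1) =
      (X 1 : MvPolynomial (Fin 2) (ZMod 2)) ⊗ₜ[ZMod 2] (1 : Polynomial (ZMod 2)) := by
    simp [coactionDelta]
  have hw : coactionDelta ((X 0 : MvPolynomial (Fin 2) (ZMod 2)) ^ 2 + X 0 * X 1) =
      ((X 0 : MvPolynomial (Fin 2) (ZMod 2)) ^ 2 + X 0 * X 1) ⊗ₜ[ZMod 2]
          (1 : Polynomial (ZMod 2)) +
        (X 1 : MvPolynomial (Fin 2) (ZMod 2)) ⊗ₜ[ZMod 2] Polynomial.X +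
        (1 : MvPolynomial (Fin 2) (ZMod 2)) ⊗ₜ[ZMod 2] Polynomial.X ^ 2 := by
    have two_eq_zero :
        (2 : MvPolynomial (Fin 2) (ZMod 2) ⊗[ZMod 2] Polynomial (ZMod 2)) = 0 := by
      rw [← map_ofNat (algebraMap (ZMod 2)
        (MvPolynomial (Fin 2) (ZMod 2) ⊗[ZMod 2] Polynomial (ZMod 2))) 2,
        show (OfNat.ofNat 2 : ZMod 2) = 0 from rfl, map_zero]
    have add_sq_char_two (a b : MvPolynomial (Fin 2) (ZMod 2) ⊗[ZMod 2] Polynomial (ZMod 2)) :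
        (a + b) ^ 2 = a ^ 2 + b ^ 2 := by
      linear_combination a * b * two_eq_zero
    simp only [coactionDelta, map_add, map_mul, map_pow, aeval_X, Matrix.cons_val_zero,
      Matrix.cons_val_one, add_sq_char_two, add_mul, TensorProduct.add_tmul,
      Algebra.TensorProduct.tmul_mul_tmul, Algebra.TensorProduct.tmul_pow, one_pow, one_mul,
      mul_one]
    abel
  refine ⟨hw, fun p hp => ?_⟩
  set A := Algebra.adjoin (ZMod 2)
    {(X 1 : MvPolynomial (Fin 2) (ZMod 2)), X 0 ^ 2 + X 0 * X 1}
  have hvA : (X 1 : MvPolynomial (Fin 2) (ZMod 2)) ∈ A := Algebra.subset_adjoin (by simp)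
  have hwA : (X 0 ^ 2 + X 0 * X 1 : MvPolynomial (Fin 2) (ZMod 2)) ∈ A :=
    Algebra.subset_adjoin (by simp)
  suffices h : A ≤ (Algebra.TensorProduct.map A.val
      (AlgHom.id (ZMod 2) (Polynomial (ZMod 2)))).range.comap coactionDelta from h hp
  refine Algebra.adjoin_le ?_
  rintro _ (rfl | rfl)
  · exact ⟨⟨X 1, hvA⟩ ⊗ₜ 1, by simp [hv]⟩
  · refine ⟨⟨_, hwA⟩ ⊗ₜ 1 + ⟨X 1, hvA⟩ ⊗ₜ Polynomial.X + 1 ⊗ₜ (Polynomial.X ^ 2), ?_⟩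
    simp [hw]
end
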